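/- arXiv:2511.18959 — 2 statements merged into one kernel-verified Lean document; each statement's English description precedes it below -/
import Mathlib

section
/- Let V be an abelian group carrying an 𝓔(r)-representation, with the derived operators e_I, f_I and the inductively defined families p_{a,i}, q_{a,i} (a ≤ 0, i ∈ [r]). Then for all integers a ≤ 0 and all i ∈ [r]: e ∘ p_{a,i} = p_{a−1,i} ∘ e, f ∘ p_{a−1,i} = p_{a,i} ∘ f, e ∘ q_{a,i} = q_{a−1,i} ∘ e, and f ∘ q_{a−1,i} = q_{a,i} ∘ f. -/
/-- The ordered product `q_I = q_{a_0} ∘ q_{a_1} ∘ ⋯ ∘ q_{a_k}` for `I = {a_0 < ⋯ < a_k}`. -/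
def qProd {r : ℕ} {V : Type*} [AddCommGroup V] (q : Fin r → AddMonoid.End V)
    (I : Finset (Fin r)) : AddMonoid.End V :=
  ((I.sort (· ≤ ·)).map q).prod

/-- The ordered product `p_I = p_{a_k} ∘ p_{a_{k-1}} ∘ ⋯ ∘ p_{a_0}` for `I = {a_0 < ⋯ < a_k}`. -/
def pProd {r : ℕ} {V : Type*} [AddCommGroup V] (p : Fin r → AddMonoid.End V)
    (I : Finset (Fin r)) : AddMonoid.End V :=
  ((I.sort (· ≤ ·)).reverse.map p).prod

/-- An `𝓔(r)`-representation on an abelian group `V`: a `Cl(r)`-representation `(p, q)`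
together with endomorphisms `e`, `f` satisfying `pᵢ∘e = 0`, `f∘qᵢ = 0`, `f∘e = id` and
`e∘f = p_{[r]}∘q_{[r]}`. -/
structure SRep (r : ℕ) (V : Type*) [AddCommGroup V] where
  p : Fin r → AddMonoid.End V
  q : Fin r → AddMonoid.End V
  e : AddMonoid.End V
  f : AddMonoid.End V
  p_sq : ∀ i, p i * p i = 0
  q_sq : ∀ i, q i * q i = 0
  p_p : ∀ i j, p i * p j + p j * p i = 0
  q_q : ∀ i j, q i * q j + q j * q i = 0
  p_q : ∀ i j, p i * q j + q j * p i = if i = j then 1 else 0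
  p_e : ∀ i, p i * e = 0
  f_q : ∀ i, f * q i = 0
  f_e : f * e = 1
  e_f : e * f = pProd p Finset.univ * qProd q Finset.univ

namespace SRep

variable {r : ℕ} {V : Type*} [AddCommGroup V]

/-- The derived operator `e_I := q_I ∘ e`. -/
def eI (ρ : SRep r V) (I : Finset (Fin r)) : AddMonoid.End V := qProd ρ.q I * ρ.e

/-- The derived operator `f_I := f ∘ p_I`. -/
def fI (ρ : SRep r V) (I : Finset (Fin r)) : AddMonoid.End V := ρ.f * pProd ρ.p I

/-- The inductively defined family `p_{-n,i}`:  `p_{0,i} := pᵢ` and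
`p_{a,i} := Σ_{I⊆[r]} (−1)^{|I|} e_I ∘ p_{a+1,i} ∘ f_I` for `a < 0`. -/
noncomputable def pNeg (ρ : SRep r V) : ℕ → Fin r → AddMonoid.End V
  | 0 => ρ.p
  | n + 1 => fun i =>
      ∑ I : Finset (Fin r), ((-1 : ℤ) ^ I.card) • (ρ.eI I * ρ.pNeg n i * ρ.fI I)

/-- The inductively defined family `q_{-n,i}`:  `q_{0,i} := qᵢ` and
`q_{a,i} := Σ_{I⊆[r]} (−1)^{|I|} e_I ∘ q_{a+1,i} ∘ f_I` for `a < 0`. -/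
noncomputable def qNeg (ρ : SRep r V) : ℕ → Fin r → AddMonoid.End V
  | 0 => ρ.q
  | n + 1 => fun i =>
      ∑ I : Finset (Fin r), ((-1 : ℤ) ^ I.card) • (ρ.eI I * ρ.qNeg n i * ρ.fI I)

/-- The operator `p_{a,i}` for `a ≤ 0`. -/
noncomputable def pA (ρ : SRep r V) (a : ℤ) (i : Fin r) : AddMonoid.End V :=
  ρ.pNeg (-a).toNat i

/-- The operator `q_{a,i}` for `a ≤ 0`. -/
noncomputable def qA (ρ : SRep r V) (a : ℤ) (i : Fin r) : AddMonoid.End V :=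
  ρ.qNeg (-a).toNat i

end SRep

/-!
Statement 15: intertwining of `e`, `f` with the inductively defined families:
`e∘p_{a,i} = p_{a−1,i}∘e`, `f∘p_{a−1,i} = p_{a,i}∘f`, `e∘q_{a,i} = q_{a−1,i}∘e`,
`f∘q_{a−1,i} = q_{a,i}∘f` for all `a ≤ 0`.
-/

/-!
Passing from `a` to `a - 1` applies one and the same operator `x ↦ Σ_I (-1)^|I| e_I ∘ x ∘ f_I` to
`p_{a,i}` and to `q_{a,i}`. Since `f` kills every `qᵢ` from the left and `e` kills every `pᵢ` from
the right, composing this sum with `f` on the left, or with `e` on the right, leaves only the term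
`I = ∅`, which is `e ∘ x ∘ f`.
-/

theorem toNat_neg_sub_one {a : ℤ} (ha : a ≤ 0) : (-(a - 1)).toNat = (-a).toNat + 1 := by
  omega

theorem exists_sort_eq_cons {α : Type*} [LinearOrder α] {s : Finset α} (hs : s.Nonempty) :
    ∃ a l, s.sort (· ≤ ·) = a :: l := by
  rw [← List.ne_nil_iff_exists_cons, ← List.length_pos_iff, Finset.length_sort]
  exact hs.card_pos

section OrderedProducts

variable {r : ℕ} {V : Type*} [AddCommGroup V]

theorem qProd_empty (q : Fin r → AddMonoid.End V) : qProd q ∅ = 1 := by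
  simp [qProd]

theorem pProd_empty (p : Fin r → AddMonoid.End V) : pProd p ∅ = 1 := by
  simp [pProd]

theorem mul_qProd_eq_zero {q : Fin r → AddMonoid.End V} {x : AddMonoid.End V}
    (hx : ∀ i, x * q i = 0) {I : Finset (Fin r)} (hI : I.Nonempty) : x * qProd q I = 0 := by
  obtain ⟨a, l, h⟩ := exists_sort_eq_cons hI
  rw [qProd, h, List.map_cons, List.prod_cons, ← mul_assoc, hx, zero_mul]

theorem pProd_mul_eq_zero {p : Fin r → AddMonoid.End V} {x : AddMonoid.End V}
    (hx : ∀ i, p i * x = 0) {I : Finset (Fin r)} (hI : I.Nonempty) : pProd p I * x = 0 := by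
  obtain ⟨a, l, h⟩ := exists_sort_eq_cons hI
  rw [pProd, h, List.reverse_cons, List.map_append, List.prod_append, List.map_singleton,
    List.prod_singleton, mul_assoc, hx, mul_zero]

end OrderedProducts

namespace SRep

variable {r : ℕ} {V : Type*} [AddCommGroup V] (ρ : SRep r V)

theorem eI_empty : ρ.eI ∅ = ρ.e := by
  rw [eI, qProd_empty, one_mul]

theorem fI_empty : ρ.fI ∅ = ρ.f := by
  rw [fI, pProd_empty, mul_one]

theorem f_mul_eI (I : Finset (Fin r)) : ρ.f * ρ.eI I = if I = ∅ then 1 else 0 := by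
  split_ifs with hI
  · rw [hI, eI_empty, f_e]
  · rw [eI, ← mul_assoc, mul_qProd_eq_zero ρ.f_q (Finset.nonempty_iff_ne_empty.2 hI), zero_mul]

theorem fI_mul_e (I : Finset (Fin r)) : ρ.fI I * ρ.e = if I = ∅ then 1 else 0 := by
  split_ifs with hI
  · rw [hI, fI_empty, f_e]
  · rw [fI, mul_assoc, pProd_mul_eq_zero ρ.p_e (Finset.nonempty_iff_ne_empty.2 hI), mul_zero]

/-- The operator `x ↦ Σ_{I⊆[r]} (-1)^|I| e_I ∘ x ∘ f_I` on endomorphisms, the recursion step from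
`p_{a,i}` to `p_{a-1,i}` and from `q_{a,i}` to `q_{a-1,i}`. -/
noncomputable def shift (x : AddMonoid.End V) : AddMonoid.End V :=
  ∑ I : Finset (Fin r), ((-1 : ℤ) ^ I.card) • (ρ.eI I * x * ρ.fI I)

theorem f_mul_shift (x : AddMonoid.End V) : ρ.f * ρ.shift x = x * ρ.f := by
  calc ρ.f * ρ.shift x
      = ∑ I : Finset (Fin r), ((-1 : ℤ) ^ I.card) • (ρ.f * ρ.eI I * x * ρ.fI I) := by
        simp only [shift, Finset.mul_sum, mul_smul_comm, mul_assoc]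
    _ = x * ρ.f := by simp [f_mul_eI, fI_empty]

theorem shift_mul_e (x : AddMonoid.End V) : ρ.shift x * ρ.e = ρ.e * x := by
  calc ρ.shift x * ρ.e
      = ∑ I : Finset (Fin r), ((-1 : ℤ) ^ I.card) • (ρ.eI I * x * (ρ.fI I * ρ.e)) := by
        simp only [shift, Finset.sum_mul, smul_mul_assoc, mul_assoc]
    _ = ρ.e * x := by simp [fI_mul_e, eI_empty]

theorem pA_sub_one {a : ℤ} (ha : a ≤ 0) (i : Fin r) : ρ.pA (a - 1) i = ρ.shift (ρ.pA a i) := by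
  rw [pA, toNat_neg_sub_one ha, pNeg, shift, pA]

theorem qA_sub_one {a : ℤ} (ha : a ≤ 0) (i : Fin r) : ρ.qA (a - 1) i = ρ.shift (ρ.qA a i) := by
  rw [qA, toNat_neg_sub_one ha, qNeg, shift, qA]

end SRep

theorem stmt_15 {r : ℕ} (hr : 0 < r) {V : Type} [AddCommGroup V] (ρ : SRep r V) :
    ∀ a : ℤ, a ≤ 0 → ∀ i : Fin r,
      ρ.e * ρ.pA a i = ρ.pA (a - 1) i * ρ.e ∧
      ρ.f * ρ.pA (a - 1) i = ρ.pA a i * ρ.f ∧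
      ρ.e * ρ.qA a i = ρ.qA (a - 1) i * ρ.e ∧
      ρ.f * ρ.qA (a - 1) i = ρ.qA a i * ρ.f := by
  intro a ha i
  rw [ρ.pA_sub_one ha, ρ.qA_sub_one ha]
  exact ⟨(ρ.shift_mul_e _).symm, ρ.f_mul_shift _, (ρ.shift_mul_e _).symm, ρ.f_mul_shift _⟩
end

section
/- Let V be an abelian group with an 𝔈(r)-representation, and let W := {v ∈ V : P_{a,i}(v) = 0 for all a > 0 and i ∈ [r], and Q_{a,i}(v) = 0 for all a ≤ 0 and i ∈ [r]}. Then the operators E_{[r]} := Q_{0,[r]} ∘ E and F_{[r]} := P_{1,[r]} ∘ F map W into W, and their restrictions to W are mutually inverse bijections of W. -/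
/-- The ordered product `Q_{a,I} = Q_{a,a_0} ∘ ⋯ ∘ Q_{a,a_k}` for `I = {a_0 < ⋯ < a_k}`. -/
def qaProd {r : ℕ} {V : Type*} [AddCommGroup V] (Q : ℤ → Fin r → AddMonoid.End V)
    (a : ℤ) (I : Finset (Fin r)) : AddMonoid.End V :=
  ((I.sort (· ≤ ·)).map (Q a)).prod

/-- The ordered product `P_{a,I} = P_{a,a_k} ∘ ⋯ ∘ P_{a,a_0}` for `I = {a_0 < ⋯ < a_k}`. -/
def paProd {r : ℕ} {V : Type*} [AddCommGroup V] (P : ℤ → Fin r → AddMonoid.End V)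
    (a : ℤ) (I : Finset (Fin r)) : AddMonoid.End V :=
  ((I.sort (· ≤ ·)).reverse.map (P a)).prod

/-- An `𝔈(r)`-representation on an abelian group `V`: operators `P_{a,i}`, `Q_{a,i}`
and a pair of mutually inverse shifts `E`, `F = E⁻¹`, subject to the defining relations
of the infinite-dimensional Clifford algebra `𝔈(r)`. -/
structure ERep (r : ℕ) (V : Type*) [AddCommGroup V] where
  P : ℤ → Fin r → AddMonoid.End V
  Q : ℤ → Fin r → AddMonoid.End V
  E : AddMonoid.End V
  F : AddMonoid.End V
  EF_eq : E * F = 1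
  FE_eq : F * E = 1
  P_sq : ∀ (a : ℤ) (i : Fin r), P a i * P a i = 0
  Q_sq : ∀ (a : ℤ) (i : Fin r), Q a i * Q a i = 0
  E_P : ∀ (a : ℤ) (i : Fin r), E * P a i = P (a - 1) i * E
  E_Q : ∀ (a : ℤ) (i : Fin r), E * Q a i = Q (a - 1) i * E
  P_P : ∀ (a b : ℤ) (i j : Fin r), P a i * P b j + P b j * P a i = 0
  Q_Q : ∀ (a b : ℤ) (i j : Fin r), Q a i * Q b j + Q b j * Q a i = 0
  P_Q : ∀ (a b : ℤ) (i j : Fin r),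
    P a i * Q b j + Q b j * P a i = if i = j ∧ a = b then 1 else 0

/-!
The relations say that `E` lowers, and `F` raises, the level of every operator by one, and that
operators anticommute except for the pairs `P_{a,i}`, `Q_{a,i}`. Hence `E` moves the vectors of
Fermi level `0` to level `-1`, and `Q_{0,[r]}` fills the level `0` again: an anticommuting factor
can be moved past the product up to sign, and a factor of the product itself squares to zero.
Moving `F` past `Q_{0,[r]}` turns `F_{[r]} E_{[r]}` into `P_{1,[r]} Q_{1,[r]}`, whose factors cancel
from the inside out, since `P_{1,i} Q_{1,i} w = w` whenever `P_{1,i} w = 0`.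

That `x` and `y` anticommute is expressed as `SemiconjBy x y (-y)`.
-/

section Monoid

variable {R ι : Type*} {l : List ι}

theorem semiconjBy_prod_map [Monoid R] {x : R} {f g : ι → R}
    (h : ∀ i ∈ l, SemiconjBy x (f i) (g i)) : SemiconjBy x (l.map f).prod (l.map g).prod := by
  induction l with
  | nil => simp
  | cons i t ih =>
    simp only [List.map_cons, List.prod_cons]
    exact (h i List.mem_cons_self).mul_right (ih fun j hj => h j (List.mem_cons_of_mem i hj))

theorem mul_prod_map_eq_zero_of_mem [MonoidWithZero R] {f g : ι → R} {k : ι} (hk : k ∈ l)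
    (hsq : f k * f k = 0) (h : ∀ i ∈ l, SemiconjBy (f k) (f i) (g i)) :
    f k * (l.map f).prod = 0 := by
  obtain ⟨s, t, rfl⟩ := List.append_of_mem hk
  have hs : SemiconjBy (f k) (s.map f).prod (s.map g).prod :=
    semiconjBy_prod_map fun i hi => h i (List.mem_append_left _ hi)
  calc f k * ((s ++ k :: t).map f).prod
      = f k * (s.map f).prod * (f k * (t.map f).prod) := by simp [mul_assoc]
    _ = (s.map g).prod * (f k * f k) * (t.map f).prod := by rw [hs.eq]; simp only [mul_assoc]
    _ = 0 := by rw [hsq, mul_zero, zero_mul]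

theorem smul_prod_map_smul_eq_zero {M : Type*} [Monoid R] [AddMonoid M] [DistribMulAction R M]
    {x : R} {f g : ι → R} {m : M} (h : ∀ i ∈ l, SemiconjBy x (f i) (g i)) (hm : x • m = 0) :
    x • (l.map f).prod • m = 0 := by
  rw [smul_smul, (semiconjBy_prod_map h).eq, mul_smul, hm, smul_zero]

end Monoid

theorem prod_map_reverse_smul_prod_map_smul {R M ι : Type*} [Ring R] [AddCommMonoid M] [Module R M]
    {p q : ι → R} {l : List ι} {m : M} (hpq : ∀ i ∈ l, p i * q i + q i * p i = 1)
    (hanti : l.Pairwise fun i j => SemiconjBy (p i) (q j) (-q j)) (hm : ∀ i ∈ l, p i • m = 0) :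
    (l.reverse.map p).prod • (l.map q).prod • m = m := by
  induction l with
  | nil => simp
  | cons i t ih =>
    rw [List.forall_mem_cons] at hpq hm
    rw [List.pairwise_cons] at hanti
    have hkill : p i • (t.map q).prod • m = 0 := smul_prod_map_smul_eq_zero hanti.1 hm.1
    have hcancel : p i • q i • (t.map q).prod • m = (t.map q).prod • m :=
      calc p i • q i • (t.map q).prod • m
          = (p i * q i + q i * p i) • (t.map q).prod • m := by
            rw [add_smul, mul_smul, mul_smul, hkill, smul_zero, add_zero]
        _ = (t.map q).prod • m := by rw [hpq.1, one_smul]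
    calc ((i :: t).reverse.map p).prod • ((i :: t).map q).prod • m
        = (t.reverse.map p).prod • p i • q i • (t.map q).prod • m := by simp [mul_smul]
      _ = m := by rw [hcancel, ih hpq.2 hanti.2 hm.2]

namespace ERep

variable {r : ℕ} {V : Type*} [AddCommGroup V] (ρ : ERep r V)

theorem semiconjBy_P_P (a b : ℤ) (i j : Fin r) :
    SemiconjBy (ρ.P a i) (ρ.P b j) (-ρ.P b j) := by
  rw [SemiconjBy, neg_mul]
  exact eq_neg_of_add_eq_zero_left (ρ.P_P a b i j)

theorem semiconjBy_Q_Q (a b : ℤ) (i j : Fin r) :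
    SemiconjBy (ρ.Q a i) (ρ.Q b j) (-ρ.Q b j) := by
  rw [SemiconjBy, neg_mul]
  exact eq_neg_of_add_eq_zero_left (ρ.Q_Q a b i j)

variable {a b : ℤ} {i j : Fin r}

theorem semiconjBy_P_Q (h : ¬(i = j ∧ a = b)) : SemiconjBy (ρ.P a i) (ρ.Q b j) (-ρ.Q b j) := by
  rw [SemiconjBy, neg_mul]
  exact eq_neg_of_add_eq_zero_left ((ρ.P_Q a b i j).trans (if_neg h))

theorem semiconjBy_Q_P (h : ¬(i = j ∧ a = b)) : SemiconjBy (ρ.Q b j) (ρ.P a i) (-ρ.P a i) := by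
  rw [SemiconjBy, neg_mul]
  exact eq_neg_of_add_eq_zero_right ((ρ.P_Q a b i j).trans (if_neg h))

theorem P_mul_Q_add_Q_mul_P (a : ℤ) (i : Fin r) : ρ.P a i * ρ.Q a i + ρ.Q a i * ρ.P a i = 1 :=
  (ρ.P_Q a a i i).trans (if_pos ⟨rfl, rfl⟩)

theorem semiconjBy_E_P (a : ℤ) (i : Fin r) : SemiconjBy ρ.E (ρ.P (a + 1) i) (ρ.P a i) := by
  simpa only [SemiconjBy, add_sub_cancel_right] using ρ.E_P (a + 1) i

theorem semiconjBy_E_Q (a : ℤ) (i : Fin r) : SemiconjBy ρ.E (ρ.Q (a + 1) i) (ρ.Q a i) := by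
  simpa only [SemiconjBy, add_sub_cancel_right] using ρ.E_Q (a + 1) i

theorem semiconjBy_F_P (a : ℤ) (i : Fin r) : SemiconjBy ρ.F (ρ.P a i) (ρ.P (a + 1) i) :=
  SemiconjBy.units_inv_symm_left (a := ⟨ρ.E, ρ.F, ρ.EF_eq, ρ.FE_eq⟩) (ρ.semiconjBy_E_P a i)

theorem semiconjBy_F_Q (a : ℤ) (i : Fin r) : SemiconjBy ρ.F (ρ.Q a i) (ρ.Q (a + 1) i) :=
  SemiconjBy.units_inv_symm_left (a := ⟨ρ.E, ρ.F, ρ.EF_eq, ρ.FE_eq⟩) (ρ.semiconjBy_E_Q a i)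

theorem semiconjBy_E_paProd (a : ℤ) (I : Finset (Fin r)) :
    SemiconjBy ρ.E (paProd ρ.P (a + 1) I) (paProd ρ.P a I) :=
  semiconjBy_prod_map fun i _ => ρ.semiconjBy_E_P a i

theorem semiconjBy_F_qaProd (a : ℤ) (I : Finset (Fin r)) :
    SemiconjBy ρ.F (qaProd ρ.Q a I) (qaProd ρ.Q (a + 1) I) :=
  semiconjBy_prod_map fun i _ => ρ.semiconjBy_F_Q a i

variable {I : Finset (Fin r)} {v : V}

theorem Q_qaProd_of_mem (a : ℤ) (hi : i ∈ I) (v : V) : ρ.Q a i (qaProd ρ.Q a I v) = 0 :=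
  DFunLike.congr_fun (mul_prod_map_eq_zero_of_mem ((Finset.mem_sort _).2 hi) (ρ.Q_sq a i)
    fun j _ => ρ.semiconjBy_Q_Q a a i j) v

theorem P_paProd_of_mem (a : ℤ) (hi : i ∈ I) (v : V) : ρ.P a i (paProd ρ.P a I v) = 0 :=
  DFunLike.congr_fun (mul_prod_map_eq_zero_of_mem
    (List.mem_reverse.2 ((Finset.mem_sort _).2 hi)) (ρ.P_sq a i)
    fun j _ => ρ.semiconjBy_P_P a a i j) v

theorem Q_qaProd_eq_zero (hv : ρ.Q a i v = 0) : ρ.Q a i (qaProd ρ.Q b I v) = 0 :=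
  smul_prod_map_smul_eq_zero (fun j _ => ρ.semiconjBy_Q_Q a b i j) hv

theorem P_paProd_eq_zero (hv : ρ.P a i v = 0) : ρ.P a i (paProd ρ.P b I v) = 0 :=
  smul_prod_map_smul_eq_zero (fun j _ => ρ.semiconjBy_P_P a b i j) hv

theorem P_qaProd_eq_zero (hab : a ≠ b) (hv : ρ.P a i v = 0) : ρ.P a i (qaProd ρ.Q b I v) = 0 :=
  smul_prod_map_smul_eq_zero (fun _ _ => ρ.semiconjBy_P_Q fun h => hab h.2) hv

theorem Q_paProd_eq_zero (hab : a ≠ b) (hv : ρ.Q a i v = 0) : ρ.Q a i (paProd ρ.P b I v) = 0 :=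
  smul_prod_map_smul_eq_zero (fun _ _ => ρ.semiconjBy_Q_P fun h => hab h.2.symm) hv

theorem paProd_qaProd_apply (hv : ∀ i ∈ I, ρ.P a i v = 0) :
    paProd ρ.P a I (qaProd ρ.Q a I v) = v :=
  prod_map_reverse_smul_prod_map_smul (fun i _ => ρ.P_mul_Q_add_Q_mul_P a i)
    ((I.sort_nodup _).imp fun hij => ρ.semiconjBy_P_Q fun h => hij h.1)
    fun i hi => hv i ((Finset.mem_sort _).1 hi)

theorem qaProd_paProd_apply (hv : ∀ i ∈ I, ρ.Q a i v = 0) :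
    qaProd ρ.Q a I (paProd ρ.P a I v) = v := by
  have hinv := prod_map_reverse_smul_prod_map_smul (p := ρ.Q a) (q := ρ.P a)
    (l := (I.sort (· ≤ ·)).reverse) (m := v)
    (fun i _ => (add_comm _ _).trans (ρ.P_mul_Q_add_Q_mul_P a i))
    ((List.nodup_reverse.2 (I.sort_nodup _)).imp fun hij => ρ.semiconjBy_Q_P fun h => hij h.1.symm)
    fun i hi => hv i ((Finset.mem_sort _).1 (List.mem_reverse.1 hi))
  rwa [List.reverse_reverse] at hinv

/-- The vectors that look like a vacuum whose Fermi level is `n`: they are annihilated by all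
`P_{a,i}` above the level and by all `Q_{a,i}` at or below it. The set `W` of the theorem is the
case `n = 0`; varying `n` lets the shifts `E`, `F` be studied separately from the products. -/
def vacuum (n : ℤ) : Set V :=
  {v | (∀ a : ℤ, n < a → ∀ i : Fin r, ρ.P a i v = 0) ∧
    (∀ a : ℤ, a ≤ n → ∀ i : Fin r, ρ.Q a i v = 0)}

theorem mapsTo_E_vacuum (n : ℤ) : Set.MapsTo ρ.E (ρ.vacuum (n + 1)) (ρ.vacuum n) := by
  rintro v ⟨hP, hQ⟩
  refine ⟨fun a ha i => ?_, fun a ha i => ?_⟩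
  · have hshift : ρ.E (ρ.P (a + 1) i v) = ρ.P a i (ρ.E v) :=
      DFunLike.congr_fun (ρ.semiconjBy_E_P a i) v
    rw [← hshift, hP (a + 1) (by lia), map_zero]
  · have hshift : ρ.E (ρ.Q (a + 1) i v) = ρ.Q a i (ρ.E v) :=
      DFunLike.congr_fun (ρ.semiconjBy_E_Q a i) v
    rw [← hshift, hQ (a + 1) (by lia), map_zero]

theorem mapsTo_F_vacuum (n : ℤ) : Set.MapsTo ρ.F (ρ.vacuum n) (ρ.vacuum (n + 1)) := by
  rintro v ⟨hP, hQ⟩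
  refine ⟨fun a ha i => ?_, fun a ha i => ?_⟩ <;>
    obtain ⟨b, rfl⟩ : ∃ b, a = b + 1 := ⟨a - 1, by lia⟩
  · have hshift : ρ.F (ρ.P b i v) = ρ.P (b + 1) i (ρ.F v) :=
      DFunLike.congr_fun (ρ.semiconjBy_F_P b i) v
    rw [← hshift, hP b (by lia), map_zero]
  · have hshift : ρ.F (ρ.Q b i v) = ρ.Q (b + 1) i (ρ.F v) :=
      DFunLike.congr_fun (ρ.semiconjBy_F_Q b i) v
    rw [← hshift, hQ b (by lia), map_zero]

theorem mapsTo_qaProd_vacuum (n : ℤ) :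
    Set.MapsTo (qaProd ρ.Q (n + 1) Finset.univ) (ρ.vacuum n) (ρ.vacuum (n + 1)) := by
  rintro v ⟨hP, hQ⟩
  refine ⟨fun a ha i => ρ.P_qaProd_eq_zero ha.ne' (hP a (by lia) i), fun a ha i => ?_⟩
  rcases ha.lt_or_eq with hlt | rfl
  · exact ρ.Q_qaProd_eq_zero (hQ a (by lia) i)
  · exact ρ.Q_qaProd_of_mem _ (Finset.mem_univ i) v

theorem mapsTo_paProd_vacuum (n : ℤ) :
    Set.MapsTo (paProd ρ.P (n + 1) Finset.univ) (ρ.vacuum (n + 1)) (ρ.vacuum n) := by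
  rintro v ⟨hP, hQ⟩
  refine ⟨fun a ha i => ?_, fun a ha i => ρ.Q_paProd_eq_zero (by lia) (hQ a (by lia) i)⟩
  rcases (Int.add_one_le_iff.2 ha).eq_or_lt with rfl | hlt
  · exact ρ.P_paProd_of_mem _ (Finset.mem_univ i) v
  · exact ρ.P_paProd_eq_zero (hP a hlt i)

theorem paProd_F_qaProd_E_apply (hv : ∀ i ∈ I, ρ.P (a + 1) i v = 0) :
    paProd ρ.P (a + 1) I (ρ.F (qaProd ρ.Q a I (ρ.E v))) = v :=
  calc paProd ρ.P (a + 1) I (ρ.F (qaProd ρ.Q a I (ρ.E v)))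
      = paProd ρ.P (a + 1) I (qaProd ρ.Q (a + 1) I (ρ.F (ρ.E v))) :=
        congrArg _ (DFunLike.congr_fun (ρ.semiconjBy_F_qaProd a I) (ρ.E v))
    _ = paProd ρ.P (a + 1) I (qaProd ρ.Q (a + 1) I v) := by
        rw [show ρ.F (ρ.E v) = v from DFunLike.congr_fun ρ.FE_eq v]
    _ = v := ρ.paProd_qaProd_apply hv

theorem qaProd_E_paProd_F_apply (hv : ∀ i ∈ I, ρ.Q a i v = 0) :
    qaProd ρ.Q a I (ρ.E (paProd ρ.P (a + 1) I (ρ.F v))) = v :=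
  calc qaProd ρ.Q a I (ρ.E (paProd ρ.P (a + 1) I (ρ.F v)))
      = qaProd ρ.Q a I (paProd ρ.P a I (ρ.E (ρ.F v))) :=
        congrArg _ (DFunLike.congr_fun (ρ.semiconjBy_E_paProd a I) (ρ.F v))
    _ = qaProd ρ.Q a I (paProd ρ.P a I v) := by
        rw [show ρ.E (ρ.F v) = v from DFunLike.congr_fun ρ.EF_eq v]
    _ = v := ρ.qaProd_paProd_apply hv

end ERep

/-!
Statement 17: on `W := {v : P_{a,i} v = 0 for a > 0, Q_{a,i} v = 0 for a ≤ 0}`, the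
operators `E_{[r]} := Q_{0,[r]} ∘ E` and `F_{[r]} := P_{1,[r]} ∘ F` are closed and
mutually inverse bijections.
-/

theorem stmt_17 {r : ℕ} (hr : 0 < r) {V : Type} [AddCommGroup V] (ρ : ERep r V)
    (W : Set V)
    (hW : W = {v : V | (∀ a : ℤ, 0 < a → ∀ i : Fin r, ρ.P a i v = 0) ∧
      (∀ a : ℤ, a ≤ 0 → ∀ i : Fin r, ρ.Q a i v = 0)}) :
    ∀ v ∈ W,
      (qaProd ρ.Q 0 Finset.univ * ρ.E) v ∈ W ∧
      (paProd ρ.P 1 Finset.univ * ρ.F) v ∈ W ∧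
      (paProd ρ.P 1 Finset.univ * ρ.F) ((qaProd ρ.Q 0 Finset.univ * ρ.E) v) = v ∧
      (qaProd ρ.Q 0 Finset.univ * ρ.E) ((paProd ρ.P 1 Finset.univ * ρ.F) v) = v := by
  subst hW
  intro v hv
  exact ⟨ρ.mapsTo_qaProd_vacuum (-1) (ρ.mapsTo_E_vacuum (-1) hv),
    ρ.mapsTo_paProd_vacuum 0 (ρ.mapsTo_F_vacuum 0 hv),
    ρ.paProd_F_qaProd_E_apply (a := 0) fun i _ => hv.1 1 one_pos i,
    ρ.qaProd_E_paProd_F_apply (a := 0) fun i _ => hv.2 0 le_rfl i⟩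
end
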